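/- arXiv:2602.20757 — 7 statements merged into one kernel-verified Lean document; each statement's English description precedes it below -/
import Mathlib

section
/- For every GLM-CGL state, the x-direction entropy-potential identity V · f_x + Φ B_x − q_x = 𝓕_x holds, where q_x = v_x 𝓔 = −ρ s v_x, Φ = 2ρ(v·B)/p⊥, and 𝓕_x = 2ρv_x + β⊥ v_x |B|² + 2 c_h β⊥ Ψ B_x. -/
/-- the x-direction entropy-potential identity
`V · f_x + Φ B_x − q_x = 𝓕_x` for every GLM-CGL state. -/
theorem glm_cgl_entropy_potential_x
    (ch : ℝ) (ρ vx vy vz pl pp Bx By Bz Ψ : ℝ)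
    (hρ : 0 < ρ) (hpl : 0 < pl) (hpp : 0 < pp)
    (e : ℝ)
    (he : e = (ρ * (vx ^ 2 + vy ^ 2 + vz ^ 2) + (Bx ^ 2 + By ^ 2 + Bz ^ 2)
        + 3 * ((2 * pp + pl) / 3)) / 2) :
    (∑ k : Fin 10,
      (![5 - Real.log (pl * pp ^ 2 / ρ ^ 5) - (ρ / pp) * (vx ^ 2 + vy ^ 2 + vz ^ 2),
          2 * (ρ / pp) * vx, 2 * (ρ / pp) * vy, 2 * (ρ / pp) * vz,
          (ρ / pp) - (ρ / pl), -(2 * (ρ / pp)),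
          2 * (ρ / pp) * Bx, 2 * (ρ / pp) * By, 2 * (ρ / pp) * Bz,
          2 * (ρ / pp) * Ψ] k)
        * (![ρ * vx,
            ρ * vx ^ 2 + pp + (Bx ^ 2 + By ^ 2 + Bz ^ 2) / 2 - Bx ^ 2,
            ρ * vx * vy - Bx * By,
            ρ * vx * vz - Bx * Bz,
            pl * vx,
            vx * (e + pp + (Bx ^ 2 + By ^ 2 + Bz ^ 2) / 2)
              - Bx * (vx * Bx + vy * By + vz * Bz) + ch * Ψ * Bx,
            ch * Ψ,
            vx * By - vy * Bx,
            vx * Bz - vz * Bx,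
            ch * Bx] k))
      + (2 * ρ * (vx * Bx + vy * By + vz * Bz) / pp) * Bx
      - vx * (-ρ * Real.log (pl * pp ^ 2 / ρ ^ 5))
      = 2 * ρ * vx + (ρ / pp) * vx * (Bx ^ 2 + By ^ 2 + Bz ^ 2)
          + 2 * ch * (ρ / pp) * Ψ * Bx := by
  have h1 : pl ≠ 0 := hpl.ne'
  have h2 : pp ≠ 0 := hpp.ne'
  generalize Real.log (pl * pp ^ 2 / ρ ^ 5) = s
  subst he
  simp [Fin.sum_univ_succ]
  field_simp
  ring
end

section
/- For every GLM-CGL state, the y-direction entropy-potential identity V · f_y + Φ B_y − q_y = 𝓕_y holds, where q_y = v_y 𝓔 = −ρ s v_y, Φ = 2ρ(v·B)/p⊥, and 𝓕_y = 2ρv_y + β⊥ v_y |B|² + 2 c_h β⊥ Ψ B_y. -/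
/-- the y-direction entropy-potential identity
`V · f_y + Φ B_y − q_y = 𝓕_y` for every GLM-CGL state. -/
theorem glm_cgl_entropy_potential_y
    (ch : ℝ) (ρ vx vy vz pl pp Bx By Bz Ψ : ℝ)
    (hρ : 0 < ρ) (hpl : 0 < pl) (hpp : 0 < pp)
    (e : ℝ)
    (he : e = (ρ * (vx ^ 2 + vy ^ 2 + vz ^ 2) + (Bx ^ 2 + By ^ 2 + Bz ^ 2)
        + 3 * ((2 * pp + pl) / 3)) / 2) :
    (∑ k : Fin 10,
      (![5 - Real.log (pl * pp ^ 2 / ρ ^ 5) - (ρ / pp) * (vx ^ 2 + vy ^ 2 + vz ^ 2),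
          2 * (ρ / pp) * vx, 2 * (ρ / pp) * vy, 2 * (ρ / pp) * vz,
          (ρ / pp) - (ρ / pl), -(2 * (ρ / pp)),
          2 * (ρ / pp) * Bx, 2 * (ρ / pp) * By, 2 * (ρ / pp) * Bz,
          2 * (ρ / pp) * Ψ] k)
        * (![ρ * vy,
            ρ * vx * vy - Bx * By,
            ρ * vy ^ 2 + pp + (Bx ^ 2 + By ^ 2 + Bz ^ 2) / 2 - By ^ 2,
            ρ * vy * vz - By * Bz,
            pl * vy,
            vy * (e + pp + (Bx ^ 2 + By ^ 2 + Bz ^ 2) / 2)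
              - By * (vx * Bx + vy * By + vz * Bz) + ch * Ψ * By,
            vy * Bx - vx * By,
            ch * Ψ,
            vy * Bz - vz * By,
            ch * By] k))
      + (2 * ρ * (vx * Bx + vy * By + vz * Bz) / pp) * By
      - vy * (-ρ * Real.log (pl * pp ^ 2 / ρ ^ 5))
      = 2 * ρ * vy + (ρ / pp) * vy * (Bx ^ 2 + By ^ 2 + Bz ^ 2)
          + 2 * ch * (ρ / pp) * Ψ * By := by
  subst he
  generalize Real.log (pl * pp ^ 2 / ρ ^ 5) = L
  have h1 : pl ≠ 0 := hpl.ne'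
  have h2 : pp ≠ 0 := hpp.ne'
  simp only [Fin.sum_univ_succ, Fin.sum_univ_zero, Matrix.cons_val_zero, Matrix.cons_val_succ]
  field_simp
  ring
end

section
/- The non-conservative vector η_NC of the reformulated GLM-CGL system is pointwise annihilated by the entropy variables: for all C¹ fields as in the context, V · η_NC = 0 at every point, where η_NC ∈ ℝ¹⁰ has components (ordered as (ρ, ρv_x, ρv_y, ρv_z, p∥, E, B_x, B_y, B_z, Ψ)): 0 in the ρ-slot; Σ_{j∈{x,y}} ∂_j((p∥−p⊥) b_i b_j) in the ρv_i-slot for i ∈ {x,y,z}; 2p∥ Σ_{j∈{x,y}} Σ_{i∈{x,y,z}} b_j (∂_j v_i) b_i in the p∥-slot; Σ_{j∈{x,y}} ∂_j((p∥−p⊥)(v·b) b_j) in the E-slot; and 0 in the B_x, B_y, B_z, Ψ slots. -/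
noncomputable section

/-- Partial derivative in the `t`-direction (first coordinate of `(t,x,y)`). -/
def pdt (f : ℝ × ℝ × ℝ → ℝ) (q : ℝ × ℝ × ℝ) : ℝ := fderiv ℝ f q (1, 0, 0)

/-- Partial derivative in the `x`-direction (second coordinate of `(t,x,y)`). -/
def pdx (f : ℝ × ℝ × ℝ → ℝ) (q : ℝ × ℝ × ℝ) : ℝ := fderiv ℝ f q (0, 1, 0)

/-- Partial derivative in the `y`-direction (third coordinate of `(t,x,y)`). -/
def pdy (f : ℝ × ℝ × ℝ → ℝ) (q : ℝ × ℝ × ℝ) : ℝ := fderiv ℝ f q (0, 0, 1)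

/-- The fields `(ρ, v, p∥, p⊥, B, Ψ)` of the GLM-CGL system, as functions of `(t,x,y)`. -/
structure GLMFields where
  ρ : ℝ × ℝ × ℝ → ℝ
  vx : ℝ × ℝ × ℝ → ℝ
  vy : ℝ × ℝ × ℝ → ℝ
  vz : ℝ × ℝ × ℝ → ℝ
  pl : ℝ × ℝ × ℝ → ℝ
  pp : ℝ × ℝ × ℝ → ℝ
  Bx : ℝ × ℝ × ℝ → ℝ
  By : ℝ × ℝ × ℝ → ℝ
  Bz : ℝ × ℝ × ℝ → ℝ
  Ψ : ℝ × ℝ × ℝ → ℝ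

namespace GLMFields

variable (F : GLMFields)

/-- `|B|`. -/
def normB (q : ℝ × ℝ × ℝ) : ℝ := Real.sqrt (F.Bx q ^ 2 + F.By q ^ 2 + F.Bz q ^ 2)

/-- `b_x = B_x/|B|`. -/
def bhx (q : ℝ × ℝ × ℝ) : ℝ := F.Bx q / F.normB q

/-- `b_y = B_y/|B|`. -/
def bhy (q : ℝ × ℝ × ℝ) : ℝ := F.By q / F.normB q

/-- `b_z = B_z/|B|`. -/
def bhz (q : ℝ × ℝ × ℝ) : ℝ := F.Bz q / F.normB q

/-- `p = (2p⊥ + p∥)/3`. -/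
def pavg (q : ℝ × ℝ × ℝ) : ℝ := (2 * F.pp q + F.pl q) / 3

/-- `e = ½(ρ|v|² + |B|² + 3p)`. -/
def eInt (q : ℝ × ℝ × ℝ) : ℝ :=
  (F.ρ q * (F.vx q ^ 2 + F.vy q ^ 2 + F.vz q ^ 2)
    + (F.Bx q ^ 2 + F.By q ^ 2 + F.Bz q ^ 2) + 3 * F.pavg q) / 2

/-- `E = e + ½Ψ²`. -/
def Etot (q : ℝ × ℝ × ℝ) : ℝ := F.eInt q + F.Ψ q ^ 2 / 2

/-- `s = ln(p∥ p⊥²/ρ⁵)`. -/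
def sEnt (q : ℝ × ℝ × ℝ) : ℝ := Real.log (F.pl q * F.pp q ^ 2 / F.ρ q ^ 5)

/-- The entropy `𝓔 = −ρ s`. -/
def ent (q : ℝ × ℝ × ℝ) : ℝ := -(F.ρ q) * F.sEnt q

/-- The entropy flux `q_x = v_x 𝓔`. -/
def entFx (q : ℝ × ℝ × ℝ) : ℝ := F.vx q * F.ent q

/-- The entropy flux `q_y = v_y 𝓔`. -/
def entFy (q : ℝ × ℝ × ℝ) : ℝ := F.vy q * F.ent q

/-- `v·B`. -/
def vdotB (q : ℝ × ℝ × ℝ) : ℝ :=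
  F.vx q * F.Bx q + F.vy q * F.By q + F.vz q * F.Bz q

/-- `v·b`. -/
def vdotb (q : ℝ × ℝ × ℝ) : ℝ :=
  F.vx q * F.bhx q + F.vy q * F.bhy q + F.vz q * F.bhz q

/-- All ten fields are `C¹` on `Ω`. -/
def IsC1On (Ω : Set (ℝ × ℝ × ℝ)) : Prop :=
  ContDiffOn ℝ 1 F.ρ Ω ∧ ContDiffOn ℝ 1 F.vx Ω ∧ ContDiffOn ℝ 1 F.vy Ω ∧
    ContDiffOn ℝ 1 F.vz Ω ∧ ContDiffOn ℝ 1 F.pl Ω ∧ ContDiffOn ℝ 1 F.pp Ω ∧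
    ContDiffOn ℝ 1 F.Bx Ω ∧ ContDiffOn ℝ 1 F.By Ω ∧ ContDiffOn ℝ 1 F.Bz Ω ∧
    ContDiffOn ℝ 1 F.Ψ Ω

/-- `ρ > 0`, `p∥ > 0`, `p⊥ > 0` and `|B| > 0` on `Ω`. -/
def Admissible (Ω : Set (ℝ × ℝ × ℝ)) : Prop :=
  ∀ q ∈ Ω, 0 < F.ρ q ∧ 0 < F.pl q ∧ 0 < F.pp q ∧ 0 < F.normB q

end GLMFields

/-- The two-dimensional GLM-CGL system (sums over `j ∈ {x,y}`, `i ∈ {x,y,z}`)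
holds at every point of `Ω`. -/
def GLMSystem (ch : ℝ) (F : GLMFields) (Ω : Set (ℝ × ℝ × ℝ)) : Prop :=
  ∀ q ∈ Ω,
    -- mass: ∂_tρ + Σ_j ∂_j(ρv_j) = 0
    (pdt F.ρ q + pdx (fun r => F.ρ r * F.vx r) q + pdy (fun r => F.ρ r * F.vy r) q = 0) ∧
    -- momentum, i = x
    (pdt (fun r => F.ρ r * F.vx r) q
      + pdx (fun r => F.ρ r * F.vx r * F.vx r + (F.pp r + F.normB r ^ 2 / 2)
          + (F.pl r - F.pp r) * F.bhx r * F.bhx r - F.Bx r * F.Bx r) q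
      + pdy (fun r => F.ρ r * F.vy r * F.vx r
          + (F.pl r - F.pp r) * F.bhx r * F.bhy r - F.Bx r * F.By r) q = 0) ∧
    -- momentum, i = y
    (pdt (fun r => F.ρ r * F.vy r) q
      + pdx (fun r => F.ρ r * F.vx r * F.vy r
          + (F.pl r - F.pp r) * F.bhy r * F.bhx r - F.By r * F.Bx r) q
      + pdy (fun r => F.ρ r * F.vy r * F.vy r + (F.pp r + F.normB r ^ 2 / 2)
          + (F.pl r - F.pp r) * F.bhy r * F.bhy r - F.By r * F.By r) q = 0) ∧
    -- momentum, i = z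
    (pdt (fun r => F.ρ r * F.vz r) q
      + pdx (fun r => F.ρ r * F.vx r * F.vz r
          + (F.pl r - F.pp r) * F.bhz r * F.bhx r - F.Bz r * F.Bx r) q
      + pdy (fun r => F.ρ r * F.vy r * F.vz r
          + (F.pl r - F.pp r) * F.bhz r * F.bhy r - F.Bz r * F.By r) q = 0) ∧
    -- parallel pressure
    (pdt F.pl q + pdx (fun r => F.pl r * F.vx r) q + pdy (fun r => F.pl r * F.vy r) q
      = -(2 * F.pl q) *
          (F.bhx q * pdx F.vx q * F.bhx q + F.bhx q * pdx F.vy q * F.bhy q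
            + F.bhx q * pdx F.vz q * F.bhz q
            + F.bhy q * pdy F.vx q * F.bhx q + F.bhy q * pdy F.vy q * F.bhy q
            + F.bhy q * pdy F.vz q * F.bhz q)) ∧
    -- total energy
    (pdt F.Etot q
      + pdx (fun r => F.vx r * (F.eInt r + F.pp r + F.normB r ^ 2 / 2)
          + (F.pl r - F.pp r) * F.vdotb r * F.bhx r - F.vdotB r * F.Bx r
          + ch * F.Ψ r * F.Bx r) q
      + pdy (fun r => F.vy r * (F.eInt r + F.pp r + F.normB r ^ 2 / 2)
          + (F.pl r - F.pp r) * F.vdotb r * F.bhy r - F.vdotB r * F.By r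
          + ch * F.Ψ r * F.By r) q
      + F.Ψ q * (F.vx q * pdx F.Ψ q + F.vy q * pdy F.Ψ q) = 0) ∧
    -- magnetic field, i = x
    (pdt F.Bx q + pdx (fun r => F.vx r * F.Bx r - F.Bx r * F.vx r + ch * F.Ψ r) q
      + pdy (fun r => F.vy r * F.Bx r - F.By r * F.vx r) q = 0) ∧
    -- magnetic field, i = y
    (pdt F.By q + pdx (fun r => F.vx r * F.By r - F.Bx r * F.vy r) q
      + pdy (fun r => F.vy r * F.By r - F.By r * F.vy r + ch * F.Ψ r) q = 0) ∧
    -- magnetic field, i = z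
    (pdt F.Bz q + pdx (fun r => F.vx r * F.Bz r - F.Bx r * F.vz r) q
      + pdy (fun r => F.vy r * F.Bz r - F.By r * F.vz r) q = 0) ∧
    -- GLM variable Ψ
    (pdt F.Ψ q + ch * (pdx F.Bx q + pdy F.By q)
      + (F.vx q * pdx F.Ψ q + F.vy q * pdy F.Ψ q) = 0)

theorem glm_aux {v1 v2 v3 P b1 b2 b3 c : ℝ × ℝ × ℝ → ℝ} {q : ℝ × ℝ × ℝ}
    (hv1 : DifferentiableAt ℝ v1 q) (hv2 : DifferentiableAt ℝ v2 q)
    (hv3 : DifferentiableAt ℝ v3 q) (hP : DifferentiableAt ℝ P q)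
    (hb1 : DifferentiableAt ℝ b1 q) (hb2 : DifferentiableAt ℝ b2 q)
    (hb3 : DifferentiableAt ℝ b3 q) (hc : DifferentiableAt ℝ c q) (w : ℝ × ℝ × ℝ) :
    fderiv ℝ (fun r => P r * (v1 r * b1 r + v2 r * b2 r + v3 r * b3 r) * c r) q w
      = v1 q * fderiv ℝ (fun r => P r * b1 r * c r) q w
        + v2 q * fderiv ℝ (fun r => P r * b2 r * c r) q w
        + v3 q * fderiv ℝ (fun r => P r * b3 r * c r) q w
        + P q * (c q * fderiv ℝ v1 q w * b1 q + c q * fderiv ℝ v2 q w * b2 q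
          + c q * fderiv ℝ v3 q w * b3 q) := by
  have e1 := ((hP.hasFDerivAt.mul hb1.hasFDerivAt).mul hc.hasFDerivAt).fderiv
  have e2 := ((hP.hasFDerivAt.mul hb2.hasFDerivAt).mul hc.hasFDerivAt).fderiv
  have e3 := ((hP.hasFDerivAt.mul hb3.hasFDerivAt).mul hc.hasFDerivAt).fderiv
  have e4 := ((hP.hasFDerivAt.mul (((hv1.hasFDerivAt.mul hb1.hasFDerivAt).add
    (hv2.hasFDerivAt.mul hb2.hasFDerivAt)).add
    (hv3.hasFDerivAt.mul hb3.hasFDerivAt))).mul hc.hasFDerivAt).fderiv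
  have e1' := congrArg (fun L => L w) e1
  have e2' := congrArg (fun L => L w) e2
  have e3' := congrArg (fun L => L w) e3
  have e4' := congrArg (fun L => L w) e4
  refine e4'.trans ?_
  refine Eq.trans ?_ (congrArg₂ (· + ·) (congrArg₂ (· + ·) (congrArg₂ (· + ·)
    (congrArg (v1 q * ·) e1'.symm) (congrArg (v2 q * ·) e2'.symm))
    (congrArg (v3 q * ·) e3'.symm)) rfl)
  simp
  ring

/-- the non-conservative vector `η_NC` of the reformulated GLM-CGL
system is pointwise annihilated by the entropy variables: `V · η_NC = 0` on `Ω`. -/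
theorem glm_cgl_nonconservative_annihilated
    (F : GLMFields) (Ω : Set (ℝ × ℝ × ℝ)) (hΩ : IsOpen Ω)
    (hreg : F.IsC1On Ω) (hadm : F.Admissible Ω) :
    ∀ q ∈ Ω,
      (∑ k : Fin 10,
        (![5 - F.sEnt q - (F.ρ q / F.pp q) * (F.vx q ^ 2 + F.vy q ^ 2 + F.vz q ^ 2),
            2 * (F.ρ q / F.pp q) * F.vx q,
            2 * (F.ρ q / F.pp q) * F.vy q,
            2 * (F.ρ q / F.pp q) * F.vz q,
            (F.ρ q / F.pp q) - (F.ρ q / F.pl q),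
            -(2 * (F.ρ q / F.pp q)),
            2 * (F.ρ q / F.pp q) * F.Bx q,
            2 * (F.ρ q / F.pp q) * F.By q,
            2 * (F.ρ q / F.pp q) * F.Bz q,
            2 * (F.ρ q / F.pp q) * F.Ψ q] k)
        * (![(0 : ℝ),
            -- ρv_x-slot: Σ_j ∂_j((p∥−p⊥) b_x b_j)
            pdx (fun r => (F.pl r - F.pp r) * F.bhx r * F.bhx r) q
              + pdy (fun r => (F.pl r - F.pp r) * F.bhx r * F.bhy r) q,
            -- ρv_y-slot
            pdx (fun r => (F.pl r - F.pp r) * F.bhy r * F.bhx r) q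
              + pdy (fun r => (F.pl r - F.pp r) * F.bhy r * F.bhy r) q,
            -- ρv_z-slot
            pdx (fun r => (F.pl r - F.pp r) * F.bhz r * F.bhx r) q
              + pdy (fun r => (F.pl r - F.pp r) * F.bhz r * F.bhy r) q,
            -- p∥-slot: 2p∥ Σ_j Σ_i b_j (∂_j v_i) b_i
            2 * F.pl q *
              (F.bhx q * pdx F.vx q * F.bhx q + F.bhx q * pdx F.vy q * F.bhy q
                + F.bhx q * pdx F.vz q * F.bhz q
                + F.bhy q * pdy F.vx q * F.bhx q + F.bhy q * pdy F.vy q * F.bhy q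
                + F.bhy q * pdy F.vz q * F.bhz q),
            -- E-slot: Σ_j ∂_j((p∥−p⊥)(v·b) b_j)
            pdx (fun r => (F.pl r - F.pp r) * F.vdotb r * F.bhx r) q
              + pdy (fun r => (F.pl r - F.pp r) * F.vdotb r * F.bhy r) q,
            0, 0, 0, 0] k))
      = 0 := by
  intro q hq
  obtain ⟨hρ, hvx, hvy, hvz, hpl, hpp, hBx, hBy, hBz, hΨ⟩ := hreg
  obtain ⟨pρ, ppl, ppp, pB⟩ := hadm q hq
  have D : ∀ {f : ℝ × ℝ × ℝ → ℝ}, ContDiffOn ℝ 1 f Ω → DifferentiableAt ℝ f q := fun h =>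
    (h.differentiableOn (by norm_num)).differentiableAt (hΩ.mem_nhds hq)
  have dN : DifferentiableAt ℝ F.normB q := by
    have h0 : F.Bx q ^ 2 + F.By q ^ 2 + F.Bz q ^ 2 ≠ 0 := (Real.sqrt_pos.mp pB).ne'
    exact DifferentiableAt.sqrt ((((D hBx).pow 2).add ((D hBy).pow 2)).add ((D hBz).pow 2)) h0
  have dx : DifferentiableAt ℝ F.bhx q := by
    have h := (D hBx).mul (dN.inv pB.ne')
    exact h
  have dy : DifferentiableAt ℝ F.bhy q := by
    have h := (D hBy).mul (dN.inv pB.ne')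
    exact h
  have dz : DifferentiableAt ℝ F.bhz q := by
    have h := (D hBz).mul (dN.inv pB.ne')
    exact h
  have dP : DifferentiableAt ℝ (fun r => F.pl r - F.pp r) q := (D hpl).sub (D hpp)
  have kx : pdx (fun r => (F.pl r - F.pp r) * F.vdotb r * F.bhx r) q = _ :=
    glm_aux (D hvx) (D hvy) (D hvz) dP dx dy dz dx (0, 1, 0)
  have ky : pdy (fun r => (F.pl r - F.pp r) * F.vdotb r * F.bhy r) q = _ :=
    glm_aux (D hvx) (D hvy) (D hvz) dP dx dy dz dy (0, 0, 1)
  rw [kx, ky]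
  simp only [pdx, pdy]
  simp [Fin.sum_univ_succ]
  field_simp
  ring

end
end

section
/- The explicit x-direction numerical flux f̃_x of the GLM-CGL system is entropy conservative: for any two GLM-CGL states U_L, U_R with ρ_L ≠ ρ_R, β∥,L ≠ β∥,R, and β⊥,L ≠ β⊥,R, the flux f̃_x with components f̃¹ = ρ^ln v̄_x; f̃² = ρ̄/β̄⊥ + v̄_x f̃¹ + ½·mean(|B|²) − B̄_x B̄_x; f̃³ = v̄_y f̃¹ − B̄_x B̄_y; f̃⁴ = v̄_z f̃¹ − B̄_x B̄_z; f̃⁵ = f̃¹/β∥^ln; f̃⁷ = c_h·mean(Ψβ⊥)/β̄⊥; f̃⁸ = (mean(β⊥v_x) B̄_y − mean(β⊥v_y) B̄_x)/β̄⊥; f̃⁹ = (mean(β⊥v_x) B̄_z − mean(β⊥v_z) B̄_x)/β̄⊥; f̃¹⁰ = c_h B̄_x; f̃⁶ = ½(2/β⊥^ln − mean(|v|²)) f̃¹ + v̄_x f̃² + v̄_y f̃³ + v̄_z f̃⁴ + f̃⁵/2 + B̄_x f̃⁷ + B̄_y f̃⁸ + B̄_z f̃⁹ − ½ v̄_x·mean(|B|²)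 + (v̄_x B̄_x + v̄_y B̄_y + v̄_z B̄_z) B̄_x, satisfies the jump relation ⟦V⟧ · f̃_x = ⟦𝓕_x⟧ − ⟦Φ⟧ B̄_x. -/
noncomputable section

/-- The logarithmic mean `a^ln = (a_R − a_L)/(ln a_R − ln a_L)`. -/
def logMean (aL aR : ℝ) : ℝ := (aR - aL) / (Real.log aR - Real.log aL)

/-- The GLM-CGL entropy variable vector `V` of a state. -/
def entVar10 (ρ vx vy vz pl pp Bx By Bz Ψ : ℝ) : Fin 10 → ℝ :=
  ![5 - Real.log (pl * pp ^ 2 / ρ ^ 5) - (ρ / pp) * (vx ^ 2 + vy ^ 2 + vz ^ 2),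
    2 * (ρ / pp) * vx, 2 * (ρ / pp) * vy, 2 * (ρ / pp) * vz,
    (ρ / pp) - (ρ / pl), -(2 * (ρ / pp)),
    2 * (ρ / pp) * Bx, 2 * (ρ / pp) * By, 2 * (ρ / pp) * Bz,
    2 * (ρ / pp) * Ψ]

/-- `Φ = 2ρ(v·B)/p⊥`. -/
def PhiOf (ρ vx vy vz pp Bx By Bz : ℝ) : ℝ :=
  2 * ρ * (vx * Bx + vy * By + vz * Bz) / pp

/-- The x-direction entropy potential `𝓕_x = 2ρv_x + β⊥v_x|B|² + 2c_hβ⊥ΨB_x`. -/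
def potFxOf (ch ρ vx pp Bx By Bz Ψ : ℝ) : ℝ :=
  2 * ρ * vx + (ρ / pp) * vx * (Bx ^ 2 + By ^ 2 + Bz ^ 2) + 2 * ch * (ρ / pp) * Ψ * Bx

lemma log_s_eq {ρ pl pp : ℝ} (hρ : 0 < ρ) (hpl : 0 < pl) (hpp : 0 < pp) :
    Real.log (pl * pp ^ 2 / ρ ^ 5)
      = -Real.log (ρ / pl) - 2 * Real.log (ρ / pp) - 2 * Real.log ρ := by
  rw [Real.log_div (by positivity) (by positivity), Real.log_mul (by positivity) (by positivity),
    Real.log_pow, Real.log_pow, Real.log_div hρ.ne' hpl.ne', Real.log_div hρ.ne' hpp.ne']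
  push_cast
  ring

lemma logMean_mul {a b : ℝ} (ha : 0 < a) (hb : 0 < b) (h : a ≠ b) :
    logMean a b * (Real.log b - Real.log a) = b - a := by
  have h2 : Real.log b - Real.log a ≠ 0 := fun h0 =>
    h (Real.log_injOn_pos ha hb (sub_eq_zero.mp h0).symm)
  exact div_mul_cancel₀ _ h2

lemma div_logMean {a b : ℝ} (h : a ≠ b) :
    (b - a) / logMean a b = Real.log b - Real.log a := by
  have h2 : b - a ≠ 0 := sub_ne_zero.mpr h.symm
  unfold logMean
  exact div_div_cancel₀ h2

/-- the explicit x-direction numerical flux `f̃_x` of the GLM-CGL system is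
entropy conservative: it satisfies the jump relation `⟦V⟧ · f̃_x = ⟦𝓕_x⟧ − ⟦Φ⟧ B̄_x`. -/
theorem glm_cgl_entropy_conservative_flux_x
    (ch : ℝ)
    (ρL vxL vyL vzL plL ppL BxL ByL BzL ΨL : ℝ)
    (ρR vxR vyR vzR plR ppR BxR ByR BzR ΨR : ℝ)
    (hρL : 0 < ρL) (hplL : 0 < plL) (hppL : 0 < ppL)
    (hρR : 0 < ρR) (hplR : 0 < plR) (hppR : 0 < ppR)
    (hρ : ρL ≠ ρR) (hbpar : ρL / plL ≠ ρR / plR) (hbperp : ρL / ppL ≠ ρR / ppR)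
    (f1 f2 f3 f4 f5 f6 f7 f8 f9 f10 : ℝ)
    (hf1 : f1 = logMean ρL ρR * ((vxL + vxR) / 2))
    (hf2 : f2 = ((ρL + ρR) / 2) / ((ρL / ppL + ρR / ppR) / 2)
        + ((vxL + vxR) / 2) * f1
        + (1 / 2) * (((BxL ^ 2 + ByL ^ 2 + BzL ^ 2) + (BxR ^ 2 + ByR ^ 2 + BzR ^ 2)) / 2)
        - ((BxL + BxR) / 2) * ((BxL + BxR) / 2))
    (hf3 : f3 = ((vyL + vyR) / 2) * f1 - ((BxL + BxR) / 2) * ((ByL + ByR) / 2))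
    (hf4 : f4 = ((vzL + vzR) / 2) * f1 - ((BxL + BxR) / 2) * ((BzL + BzR) / 2))
    (hf5 : f5 = f1 / logMean (ρL / plL) (ρR / plR))
    (hf7 : f7 = ch * ((ΨL * (ρL / ppL) + ΨR * (ρR / ppR)) / 2)
        / ((ρL / ppL + ρR / ppR) / 2))
    (hf8 : f8 = (((ρL / ppL) * vxL + (ρR / ppR) * vxR) / 2 * ((ByL + ByR) / 2)
        - ((ρL / ppL) * vyL + (ρR / ppR) * vyR) / 2 * ((BxL + BxR) / 2))
        / ((ρL / ppL + ρR / ppR) / 2))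
    (hf9 : f9 = (((ρL / ppL) * vxL + (ρR / ppR) * vxR) / 2 * ((BzL + BzR) / 2)
        - ((ρL / ppL) * vzL + (ρR / ppR) * vzR) / 2 * ((BxL + BxR) / 2))
        / ((ρL / ppL + ρR / ppR) / 2))
    (hf10 : f10 = ch * ((BxL + BxR) / 2))
    (hf6 : f6 = (1 / 2) * (2 / logMean (ρL / ppL) (ρR / ppR)
          - ((vxL ^ 2 + vyL ^ 2 + vzL ^ 2) + (vxR ^ 2 + vyR ^ 2 + vzR ^ 2)) / 2) * f1
        + ((vxL + vxR) / 2) * f2 + ((vyL + vyR) / 2) * f3 + ((vzL + vzR) / 2) * f4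
        + f5 / 2
        + ((BxL + BxR) / 2) * f7 + ((ByL + ByR) / 2) * f8 + ((BzL + BzR) / 2) * f9
        - (1 / 2) * ((vxL + vxR) / 2)
            * (((BxL ^ 2 + ByL ^ 2 + BzL ^ 2) + (BxR ^ 2 + ByR ^ 2 + BzR ^ 2)) / 2)
        + (((vxL + vxR) / 2) * ((BxL + BxR) / 2) + ((vyL + vyR) / 2) * ((ByL + ByR) / 2)
            + ((vzL + vzR) / 2) * ((BzL + BzR) / 2)) * ((BxL + BxR) / 2)) :
    (∑ k : Fin 10,
        (entVar10 ρR vxR vyR vzR plR ppR BxR ByR BzR ΨR k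
          - entVar10 ρL vxL vyL vzL plL ppL BxL ByL BzL ΨL k)
        * (![f1, f2, f3, f4, f5, f6, f7, f8, f9, f10] k))
      = (potFxOf ch ρR vxR ppR BxR ByR BzR ΨR - potFxOf ch ρL vxL ppL BxL ByL BzL ΨL)
        - (PhiOf ρR vxR vyR vzR ppR BxR ByR BzR - PhiOf ρL vxL vyL vzL ppL BxL ByL BzL)
          * ((BxL + BxR) / 2) := by
  have hbL : 0 < ρL / ppL := div_pos hρL hppL
  have hbR : 0 < ρR / ppR := div_pos hρR hppR
  have haL : 0 < ρL / plL := div_pos hρL hplL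
  have haR : 0 < ρR / plR := div_pos hρR hplR
  have hsL := log_s_eq hρL hplL hppL
  have hsR := log_s_eq hρR hplR hppR
  have h1 : f1 * (Real.log ρR - Real.log ρL) = (ρR - ρL) * ((vxL + vxR) / 2) := by
    rw [hf1, mul_right_comm, logMean_mul hρL hρR hρ]
  have h5 : f5 * (ρR / plR - ρL / plL)
      = f1 * (Real.log (ρR / plR) - Real.log (ρL / plL)) := by
    rw [hf5, div_mul_eq_mul_div, mul_div_assoc, div_logMean hbpar]
  have hq : 1 / logMean (ρL / ppL) (ρR / ppR) * (ρR / ppR - ρL / ppL)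
      = Real.log (ρR / ppR) - Real.log (ρL / ppL) := by
    rw [div_mul_eq_mul_div, one_mul, div_logMean hbperp]
  have hPR : PhiOf ρR vxR vyR vzR ppR BxR ByR BzR
      = 2 * (ρR / ppR) * (vxR * BxR + vyR * ByR + vzR * BzR) := by
    unfold PhiOf; ring
  have hPL : PhiOf ρL vxL vyL vzL ppL BxL ByL BzL
      = 2 * (ρL / ppL) * (vxL * BxL + vyL * ByL + vzL * BzL) := by
    unfold PhiOf; ring
  rw [hPR, hPL]
  simp only [Fin.sum_univ_succ, Fin.sum_univ_zero, entVar10, potFxOf, hsL, hsR]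
  simp only [Matrix.cons_val_zero, Matrix.cons_val_succ]
  rw [show (2 : ℝ) / logMean (ρL / ppL) (ρR / ppR)
    = 2 * (1 / logMean (ρL / ppL) (ρR / ppR)) by ring] at hf6
  clear hsL hsR hPR hPL hf1 hf5 hρ hbpar hbperp
  generalize 1 / logMean (ρL / ppL) (ρR / ppR) = q at *
  generalize Real.log (ρL / ppL) = lbL at *
  generalize Real.log (ρR / ppR) = lbR at *
  generalize Real.log (ρL / plL) = laL at *
  generalize Real.log (ρR / plR) = laR at *
  generalize Real.log ρL = lL at *
  generalize Real.log ρR = lR at *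
  generalize ρL / ppL = bL at *
  generalize ρR / ppR = bR at *
  generalize ρL / plL = aL at *
  generalize ρR / plR = aR at *
  have hm : (bL + bR) / 2 ≠ 0 := by positivity
  have hG : ((ρL + ρR) / 2) / ((bL + bR) / 2) * ((bL + bR) / 2) = (ρL + ρR) / 2 :=
    div_mul_cancel₀ _ hm
  generalize ((ρL + ρR) / 2) / ((bL + bR) / 2) = G at *
  rw [eq_div_iff hm] at hf7 hf8 hf9
  subst hf6 hf10 hf2 hf3 hf4
  linear_combination 2 * h1 - h5 - 2 * f1 * hq + 2 * (vxR - vxL) * hG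
    + 2 * (BxR - BxL) * hf7 + 2 * (ByR - ByL) * hf8 + 2 * (BzR - BzL) * hf9

end
end

section
/- The one-dimensional semi-discrete GLM-CGL scheme built from entropy conservative fluxes is entropy conservative: suppose for each i ∈ ℤ/Nℤ, U_i : I → ℝ¹⁰ is a differentiable curve of GLM-CGL states, for each interface f̃_{i+1/2}(t) ∈ ℝ¹⁰ satisfies the jump relation (V_{i+1} − V_i)·f̃_{i+1/2} = (𝓕_{x,i+1} − 𝓕_{x,i}) − (Φ_{i+1} − Φ_i)·(B_{x,i} + B_{x,i+1})/2, for each i the matrix N_i(t) ∈ ℝ^{10×10} satisfies V_iᵀ N_i = 0, and the semi-discrete scheme dU_i/dt + (f̃_{i+1/2} − f̃_{i−1/2})/Δx + Φ′(U_i)·(B_{x,i+1} − B_{x,i−1})/(2Δx) + N_i·(U_{i+1} − U_{i−1})/(2Δx) = 0 holds, where Φ′(U) = (0, B_x, B_y, B_z, 0, v·B, v_x, v_y, v_z, 0). Then for every i, d𝓔(U_i)/dt + (q̃_{i+1/2} − q̃_{i−1/2})/Δx = 0, where q̃_{i+1/2} = V̄_{i+1/2}·f̃_{i+1/2} + Φ̄_{i+1/2}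 B̄_{x,i+1/2} − 𝓕̄_{x,i+1/2} and bars denote interface arithmetic means of the corresponding quantities at U_i and U_{i+1}. -/
noncomputable section

/-- A GLM-CGL state in primitive variables. -/
structure GLMState where
  ρ : ℝ
  vx : ℝ
  vy : ℝ
  vz : ℝ
  pl : ℝ
  pp : ℝ
  Bx : ℝ
  By : ℝ
  Bz : ℝ
  Ψ : ℝ

namespace GLMState

variable (S : GLMState)

/-- Average pressure `p = (2p⊥ + p∥)/3`. -/
def pavg : ℝ := (2 * S.pp + S.pl) / 3

/-- Total energy `E = ½(ρ|v|² + |B|² + 3p) + ½Ψ²`. -/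
def Etot : ℝ :=
  (S.ρ * (S.vx ^ 2 + S.vy ^ 2 + S.vz ^ 2) + (S.Bx ^ 2 + S.By ^ 2 + S.Bz ^ 2)
    + 3 * S.pavg) / 2 + S.Ψ ^ 2 / 2

/-- The conservative vector `U = (ρ, ρv, p∥, E, B, Ψ)`. -/
def consU : Fin 10 → ℝ :=
  ![S.ρ, S.ρ * S.vx, S.ρ * S.vy, S.ρ * S.vz, S.pl, S.Etot, S.Bx, S.By, S.Bz, S.Ψ]

/-- `s = ln(p∥ p⊥²/ρ⁵)`. -/
def sEnt : ℝ := Real.log (S.pl * S.pp ^ 2 / S.ρ ^ 5)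

/-- The entropy `𝓔 = −ρ s`. -/
def entropy : ℝ := -S.ρ * S.sEnt

/-- The entropy variable vector `V`. -/
def entVar : Fin 10 → ℝ :=
  ![5 - S.sEnt - (S.ρ / S.pp) * (S.vx ^ 2 + S.vy ^ 2 + S.vz ^ 2),
    2 * (S.ρ / S.pp) * S.vx, 2 * (S.ρ / S.pp) * S.vy, 2 * (S.ρ / S.pp) * S.vz,
    (S.ρ / S.pp) - (S.ρ / S.pl), -(2 * (S.ρ / S.pp)),
    2 * (S.ρ / S.pp) * S.Bx, 2 * (S.ρ / S.pp) * S.By, 2 * (S.ρ / S.pp) * S.Bz,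
    2 * (S.ρ / S.pp) * S.Ψ]

/-- `Φ = 2ρ(v·B)/p⊥`. -/
def Phi : ℝ := 2 * S.ρ * (S.vx * S.Bx + S.vy * S.By + S.vz * S.Bz) / S.pp

/-- The x-direction entropy potential `𝓕_x = 2ρv_x + β⊥v_x|B|² + 2c_hβ⊥ΨB_x`. -/
def potFx (ch : ℝ) : ℝ :=
  2 * S.ρ * S.vx + (S.ρ / S.pp) * S.vx * (S.Bx ^ 2 + S.By ^ 2 + S.Bz ^ 2)
    + 2 * ch * (S.ρ / S.pp) * S.Ψ * S.Bx

/-- `Φ′(U) = (0, B_x, B_y, B_z, 0, v·B, v_x, v_y, v_z, 0)`. -/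
def phiPrime : Fin 10 → ℝ :=
  ![0, S.Bx, S.By, S.Bz, 0, S.vx * S.Bx + S.vy * S.By + S.vz * S.Bz,
    S.vx, S.vy, S.vz, 0]

end GLMState

/-- The numerical entropy flux
`q̃_{i+1/2} = V̄·f̃_{i+1/2} + Φ̄ B̄_x − 𝓕̄_x` (interface arithmetic means). -/
def qtil (ch : ℝ) {N : ℕ} (U : ZMod N → ℝ → GLMState)
    (ftil : ZMod N → ℝ → Fin 10 → ℝ) (i : ZMod N) (t : ℝ) : ℝ :=
  (∑ k : Fin 10, (((U i t).entVar k + (U (i + 1) t).entVar k) / 2) * ftil i t k)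
    + (((U i t).Phi + (U (i + 1) t).Phi) / 2) * (((U i t).Bx + (U (i + 1) t).Bx) / 2)
    - (((U i t).potFx ch + (U (i + 1) t).potFx ch) / 2)

/-- Chain rule: `d𝓔/dt = V · dU/dt`. -/
theorem entropy_chain (u : ℝ → GLMState) (t : ℝ)
    (h : 0 < (u t).ρ ∧ 0 < (u t).pl ∧ 0 < (u t).pp)
    (hd : ∀ k : Fin 10, DifferentiableAt ℝ (fun τ => (u τ).consU k) t) :
    deriv (fun τ => (u τ).entropy) t
      = ∑ k : Fin 10, (u t).entVar k * deriv (fun τ => (u τ).consU k) t := by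
  obtain ⟨hρ, hl, hp⟩ := h
  have d := fun k => (hd k).hasDerivAt
  generalize hD : (fun k : Fin 10 => deriv (fun τ => (u τ).consU k) t) = D at *
  have hD' : ∀ k, deriv (fun τ => (u τ).consU k) t = D k := fun k => congrFun hD k
  simp only [hD'] at d ⊢
  have d0 : HasDerivAt (fun τ => (u τ).ρ) (D 0) t := d 0
  have d1 : HasDerivAt (fun τ => (u τ).ρ * (u τ).vx) (D 1) t := d 1
  have d2 : HasDerivAt (fun τ => (u τ).ρ * (u τ).vy) (D 2) t := d 2
  have d3 : HasDerivAt (fun τ => (u τ).ρ * (u τ).vz) (D 3) t := d 3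
  have d4 : HasDerivAt (fun τ => (u τ).pl) (D 4) t := d 4
  have d5 : HasDerivAt (fun τ => (u τ).Etot) (D 5) t := d 5
  have d6 : HasDerivAt (fun τ => (u τ).Bx) (D 6) t := d 6
  have d7 : HasDerivAt (fun τ => (u τ).By) (D 7) t := d 7
  have d8 : HasDerivAt (fun τ => (u τ).Bz) (D 8) t := d 8
  have d9 : HasDerivAt (fun τ => (u τ).Ψ) (D 9) t := d 9
  have hpp : (fun τ => (u τ).pp) = fun τ => (u τ).Etot
      - ((((u τ).ρ * (u τ).vx) ^ 2 + ((u τ).ρ * (u τ).vy) ^ 2 + ((u τ).ρ * (u τ).vz) ^ 2)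
          / (u τ).ρ
        + ((u τ).Bx ^ 2 + (u τ).By ^ 2 + (u τ).Bz ^ 2) + (u τ).pl + (u τ).Ψ ^ 2) / 2 := by
    funext τ
    simp only [GLMState.Etot, GLMState.pavg]
    by_cases h0 : (u τ).ρ = 0
    · simp only [h0]; ring
    · field_simp; ring
  have dpp : HasDerivAt (fun τ => (u τ).pp)
      (D 5 - ((u t).vx * D 1 + (u t).vy * D 2 + (u t).vz * D 3)
        + ((u t).vx ^ 2 + (u t).vy ^ 2 + (u t).vz ^ 2) * D 0 / 2
        - ((u t).Bx * D 6 + (u t).By * D 7 + (u t).Bz * D 8) - D 4 / 2 - (u t).Ψ * D 9) t := by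
    rw [hpp]
    have := d5.fun_sub (((((((d1.fun_pow 2).fun_add (d2.fun_pow 2)).fun_add (d3.fun_pow 2)).fun_div
      d0 hρ.ne').fun_add (((d6.fun_pow 2).fun_add (d7.fun_pow 2)).fun_add (d8.fun_pow 2))).fun_add
      d4).fun_add (d9.fun_pow 2) |>.div_const 2)
    refine this.congr_deriv ?_
    push_cast
    field_simp
    ring
  generalize hP : (D 5 - ((u t).vx * D 1 + (u t).vy * D 2 + (u t).vz * D 3)
        + ((u t).vx ^ 2 + (u t).vy ^ 2 + (u t).vz ^ 2) * D 0 / 2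
        - ((u t).Bx * D 6 + (u t).By * D 7 + (u t).Bz * D 8) - D 4 / 2 - (u t).Ψ * D 9) = P at dpp
  have dE := d0.fun_neg.fun_mul (((d4.fun_mul (dpp.fun_pow 2)).fun_div (d0.fun_pow 5)
    (pow_pos hρ 5).ne').log (by positivity))
  have e : HasDerivAt (fun τ => (u τ).entropy)
      ((5 - (u t).sEnt) * D 0 - (u t).ρ / (u t).pl * D 4 - 2 * ((u t).ρ / (u t).pp) * P) t := by
    refine HasDerivAt.congr_deriv (f := fun τ => (u τ).entropy) dE ?_
    simp only [GLMState.sEnt]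
    generalize Real.log _ = L
    push_cast
    field_simp
    ring
  rw [e.deriv, ← hP]
  simp only [Fin.sum_univ_succ, Fin.sum_univ_zero]
  simp [GLMState.entVar]
  ring

/-- `V · Φ′ = Φ`. -/
theorem entVar_phiPrime (S : GLMState) :
    ∑ k : Fin 10, S.entVar k * S.phiPrime k = S.Phi := by
  simp only [Fin.sum_univ_succ, Fin.sum_univ_zero]
  simp [GLMState.entVar, GLMState.phiPrime, GLMState.Phi]
  ring

/-- the one-dimensional semi-discrete GLM-CGL scheme built from entropy
conservative fluxes and non-conservative terms annihilated by the entropy variables is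
entropy conservative: `d𝓔(U_i)/dt + (q̃_{i+1/2} − q̃_{i−1/2})/Δx = 0`. -/
theorem semi_discrete_glm_cgl_entropy_conservative
    (ch : ℝ) (N : ℕ) (hN : 1 ≤ N) (Δx : ℝ) (hΔx : 0 < Δx)
    (I : Set ℝ) (hI : IsOpen I)
    (U : ZMod N → ℝ → GLMState)
    (hpos : ∀ i : ZMod N, ∀ t ∈ I, 0 < (U i t).ρ ∧ 0 < (U i t).pl ∧ 0 < (U i t).pp)
    (hdiff : ∀ i : ZMod N, ∀ k : Fin 10, ∀ t ∈ I,
      DifferentiableAt ℝ (fun τ => (U i τ).consU k) t)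
    (ftil : ZMod N → ℝ → Fin 10 → ℝ)
    (hjump : ∀ i : ZMod N, ∀ t ∈ I,
      (∑ k : Fin 10, ((U (i + 1) t).entVar k - (U i t).entVar k) * ftil i t k)
        = ((U (i + 1) t).potFx ch - (U i t).potFx ch)
          - ((U (i + 1) t).Phi - (U i t).Phi) * (((U i t).Bx + (U (i + 1) t).Bx) / 2))
    (Nmat : ZMod N → ℝ → Matrix (Fin 10) (Fin 10) ℝ)
    (hNmat : ∀ i : ZMod N, ∀ t ∈ I, ∀ m : Fin 10,
      (∑ k : Fin 10, (U i t).entVar k * Nmat i t k m) = 0)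
    (hscheme : ∀ i : ZMod N, ∀ t ∈ I, ∀ k : Fin 10,
      deriv (fun τ => (U i τ).consU k) t
        + (ftil i t k - ftil (i - 1) t k) / Δx
        + (U i t).phiPrime k * (((U (i + 1) t).Bx - (U (i - 1) t).Bx) / (2 * Δx))
        + (∑ m : Fin 10,
            Nmat i t k m * ((U (i + 1) t).consU m - (U (i - 1) t).consU m)) / (2 * Δx)
        = 0) :
    ∀ i : ZMod N, ∀ t ∈ I,
      deriv (fun τ => (U i τ).entropy) t
        + (qtil ch U ftil i t - qtil ch U ftil (i - 1) t) / Δx = 0 := by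
  intro i t ht
  rw [entropy_chain (U i) t (hpos i t ht) (fun k => hdiff i k t ht)]
  have h1 := hjump i t ht
  have h2 := hjump (i - 1) t ht
  have hΦ := entVar_phiPrime (U i t)
  have hNz : ∑ k : Fin 10, (U i t).entVar k * (∑ m : Fin 10,
      Nmat i t k m * ((U (i + 1) t).consU m - (U (i - 1) t).consU m)) = 0 := by
    simp only [Finset.mul_sum]
    rw [Finset.sum_comm]
    refine Finset.sum_eq_zero fun m _ => ?_
    simp only [← mul_assoc]
    rw [← Finset.sum_mul, hNmat i t ht m, zero_mul]
  have hs := hscheme i t ht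
  obtain ⟨W, hW⟩ : ∃ W : Fin 10 → ℝ, ∀ k, (∑ m : Fin 10,
      Nmat i t k m * ((U (i + 1) t).consU m - (U (i - 1) t).consU m)) = W k := ⟨_, fun _ => rfl⟩
  simp only [hW] at hs hNz
  have hd : ∀ k : Fin 10, deriv (fun τ => (U i τ).consU k) t =
      -((ftil i t k - ftil (i - 1) t k) / Δx)
        - (U i t).phiPrime k * (((U (i + 1) t).Bx - (U (i - 1) t).Bx) / (2 * Δx))
        - W k / (2 * Δx) :=
    fun k => by linarith [hs k]
  simp only [hd, mul_sub, Finset.sum_sub_distrib, mul_neg, Finset.sum_neg_distrib]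
  simp only [← mul_assoc, ← mul_div_assoc, ← Finset.sum_div, ← Finset.sum_mul]
  rw [hNz, hΦ]
  simp only [qtil, sub_add_cancel, add_div, add_mul, sub_mul, mul_sub, Finset.sum_add_distrib,
    Finset.sum_sub_distrib, div_mul_eq_mul_div, ← Finset.sum_div] at h1 h2 ⊢
  field_simp
  linarith

end
end

section
/- On the open set D of admissible conservative states, the entropy function 𝓔(U) = −ρ ln(p∥ p⊥(U)²/ρ⁵) is differentiable, and its gradient with respect to U = (ρ, m_x, m_y, m_z, p∥, E, B_x, B_y, B_z, Ψ) equals the entropy variable vector V = (5 − s − β⊥|v|², 2β⊥v_x, 2β⊥v_y, 2β⊥v_z, β⊥ − β∥, −2β⊥, 2β⊥B_x, 2β⊥B_y, 2β⊥B_z, 2β⊥Ψ), where v = (m_x/ρ, m_y/ρ, m_z/ρ), β⊥ = ρ/p⊥(U), β∥ = ρ/p∥, and s = ln(p∥ p⊥(U)²/ρ⁵). -/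
noncomputable section

/-- Perpendicular pressure recovered from the conservative GLM-CGL state
`U = (ρ, m_x, m_y, m_z, p∥, E, B_x, B_y, B_z, Ψ)`. -/
def pperpU (U : Fin 10 → ℝ) : ℝ :=
  (2 * U 5 - (U 1 ^ 2 + U 2 ^ 2 + U 3 ^ 2) / U 0
    - (U 6 ^ 2 + U 7 ^ 2 + U 8 ^ 2) - U 9 ^ 2 - U 4) / 2

/-- The set of admissible conservative states. -/
def admissD : Set (Fin 10 → ℝ) :=
  {U | 0 < U 0 ∧ 0 < U 4 ∧ 0 < pperpU U}

/-- The entropy function `𝓔(U) = −ρ ln(p∥ p⊥(U)²/ρ⁵)`. -/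
def entU (U : Fin 10 → ℝ) : ℝ :=
  -(U 0) * Real.log (U 4 * (pperpU U) ^ 2 / (U 0) ^ 5)

/-- The entropy variable vector `V(U)` expressed in conservative variables. -/
def entVarU (U : Fin 10 → ℝ) : Fin 10 → ℝ :=
  ![5 - Real.log (U 4 * (pperpU U) ^ 2 / (U 0) ^ 5)
      - (U 0 / pperpU U) * ((U 1 / U 0) ^ 2 + (U 2 / U 0) ^ 2 + (U 3 / U 0) ^ 2),
    2 * (U 0 / pperpU U) * (U 1 / U 0),
    2 * (U 0 / pperpU U) * (U 2 / U 0),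
    2 * (U 0 / pperpU U) * (U 3 / U 0),
    (U 0 / pperpU U) - (U 0 / U 4),
    -(2 * (U 0 / pperpU U)),
    2 * (U 0 / pperpU U) * U 6,
    2 * (U 0 / pperpU U) * U 7,
    2 * (U 0 / pperpU U) * U 8,
    2 * (U 0 / pperpU U) * U 9]

theorem pperpU_hasFDerivAt (U : Fin 10 → ℝ) (h0 : U 0 ≠ 0) :
    HasFDerivAt pperpU
      (∑ i : Fin 10,
        (![(U 1 ^ 2 + U 2 ^ 2 + U 3 ^ 2) / (2 * U 0 ^ 2), -(U 1 / U 0), -(U 2 / U 0),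
          -(U 3 / U 0), -(1 / 2), 1, -U 6, -U 7, -U 8, -U 9] : Fin 10 → ℝ) i •
          (ContinuousLinearMap.proj i : (Fin 10 → ℝ) →L[ℝ] ℝ)) U := by
  have p : ∀ i : Fin 10, HasFDerivAt (fun W : Fin 10 → ℝ => W i)
      (ContinuousLinearMap.proj i : (Fin 10 → ℝ) →L[ℝ] ℝ) U := fun i => hasFDerivAt_apply i U
  have hinv : HasFDerivAt (fun W : Fin 10 → ℝ => (W 0)⁻¹) _ U :=
    (hasDerivAt_inv h0).comp_hasFDerivAt U (p 0)
  have h := ((((((p 5).const_mul 2).sub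
    (((((p 1).pow 2).add ((p 2).pow 2)).add ((p 3).pow 2)).mul hinv)).sub
    ((((p 6).pow 2).add ((p 7).pow 2)).add ((p 8).pow 2))).sub ((p 9).pow 2)).sub
    (p 4)).mul_const (2⁻¹ : ℝ)
  refine h.congr_fderiv ?_
  ext W
  simp [Fin.sum_univ_succ]
  field_simp
  ring

/-- `D` is open, and on `D` the entropy `𝓔` is differentiable with
gradient (with respect to the conservative variables `U`) equal to the entropy
variable vector `V`. -/
theorem entropy_gradient_is_entropy_variable :
    IsOpen admissD ∧
      ∀ U ∈ admissD,
        HasFDerivAt entU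
          (∑ i : Fin 10,
            entVarU U i • (ContinuousLinearMap.proj i : (Fin 10 → ℝ) →L[ℝ] ℝ)) U := by
  refine ⟨?_, ?_⟩
  · rw [isOpen_iff_mem_nhds]
    rintro U ⟨h0, h4, hp⟩
    have c0 : ContinuousAt (fun W : Fin 10 → ℝ => W 0) U := (continuous_apply 0).continuousAt
    have c4 : ContinuousAt (fun W : Fin 10 → ℝ => W 4) U := (continuous_apply 4).continuousAt
    have cp := (pperpU_hasFDerivAt U h0.ne').continuousAt
    filter_upwards [c0.eventually (lt_mem_nhds h0), c4.eventually (lt_mem_nhds h4),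
      cp.eventually (lt_mem_nhds hp)] with W a b c
    exact ⟨a, b, c⟩
  · rintro U ⟨h0, h4, hp⟩
    have p : ∀ i : Fin 10, HasFDerivAt (fun W : Fin 10 → ℝ => W i)
        (ContinuousLinearMap.proj i : (Fin 10 → ℝ) →L[ℝ] ℝ) U := fun i => hasFDerivAt_apply i U
    have hP := pperpU_hasFDerivAt U h0.ne'
    have hinv : HasFDerivAt (fun W : Fin 10 → ℝ => (W 0 ^ 5)⁻¹) _ U :=
      (hasDerivAt_inv (pow_ne_zero 5 h0.ne')).comp_hasFDerivAt U ((p 0).pow 5)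
    have hne : U 4 * pperpU U ^ 2 * (U 0 ^ 5)⁻¹ ≠ 0 := by positivity
    have h := (p 0).neg.mul ((((p 4).mul (hP.pow 2)).mul hinv).log hne)
    refine h.congr_fderiv ?_
    ext W
    simp only [entVarU, Pi.mul_apply, Pi.neg_apply, div_eq_mul_inv (U 4 * pperpU U ^ 2)]
    clear h hinv hne hP p
    generalize pperpU U = q at *
    have h0' := h0.ne'
    have h4' := h4.ne'
    have hp' := hp.ne'
    simp [Fin.sum_univ_succ]
    generalize Real.log _ = L
    field_simp
    ring

end
end

section
/- For all ρ > 0, p∥ > 0, p⊥ > 0, the 10×10 real matrix T, which is zero off the stated entries, has diagonal entries (1/(2√(2ρ)), 1/(2√(2ρ)), √p⊥/(2√ρ), √p⊥/(2ρ), t₅₅, t₆₆, √p⊥/(2ρ), √p⊥/(2√ρ), 1/(2√(2ρ)), 1/(2√(2ρ))) and symmetric off-diagonal entries t₅₆ = t₆₅, where with D = 5p∥² + 4p∥ρ + ρ² one sets t₅₅ = √ρ(2p∥ + ρ)/(2√D), t₅₆ = p∥√ρ/(2√D), t₆₆ = p∥(5p∥ + 2ρ)/(2√(ρD)), is symmetric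 positive definite and satisfies T² = 𝒴, where 𝒴 is the 10×10 matrix that is zero off the stated entries, with diagonal (1/(8ρ), 1/(8ρ), p⊥/(4ρ), p⊥/(4ρ²), ρ/4, 5p∥²/(4ρ), p⊥/(4ρ²), p⊥/(4ρ), 1/(8ρ), 1/(8ρ)) and symmetric entries 𝒴₅₆ = 𝒴₆₅ = p∥/4; that is, T is the positive square root of 𝒴 used in the Barth scaling of the GLM-CGL right eigenvectors. -/
noncomputable section

/-- Diagonal entries of the Barth scaling matrix `T` (indices 1..10 ↦ 0..9). -/
def Tdiag (ρ pl pp : ℝ) : Fin 10 → ℝ :=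
  ![1 / (2 * Real.sqrt (2 * ρ)),
    1 / (2 * Real.sqrt (2 * ρ)),
    Real.sqrt pp / (2 * Real.sqrt ρ),
    Real.sqrt pp / (2 * ρ),
    Real.sqrt ρ * (2 * pl + ρ) / (2 * Real.sqrt (5 * pl ^ 2 + 4 * pl * ρ + ρ ^ 2)),
    pl * (5 * pl + 2 * ρ) / (2 * Real.sqrt (ρ * (5 * pl ^ 2 + 4 * pl * ρ + ρ ^ 2))),
    Real.sqrt pp / (2 * ρ),
    Real.sqrt pp / (2 * Real.sqrt ρ),
    1 / (2 * Real.sqrt (2 * ρ)),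
    1 / (2 * Real.sqrt (2 * ρ))]

/-- The Barth scaling matrix `T`: diagonal entries `Tdiag`, symmetric entries
`t₅₆ = t₆₅ = p∥√ρ/(2√D)` (at indices (4,5),(5,4) in 0-based numbering), zero elsewhere. -/
def Tmat (ρ pl pp : ℝ) : Matrix (Fin 10) (Fin 10) ℝ :=
  Matrix.of fun i j =>
    if i = j then Tdiag ρ pl pp i
    else if (i = 4 ∧ j = 5) ∨ (i = 5 ∧ j = 4) then
      pl * Real.sqrt ρ / (2 * Real.sqrt (5 * pl ^ 2 + 4 * pl * ρ + ρ ^ 2))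
    else 0

/-- Diagonal entries of the matrix `𝒴`. -/
def Ydiag (ρ pl pp : ℝ) : Fin 10 → ℝ :=
  ![1 / (8 * ρ), 1 / (8 * ρ), pp / (4 * ρ), pp / (4 * ρ ^ 2),
    ρ / 4, 5 * pl ^ 2 / (4 * ρ), pp / (4 * ρ ^ 2), pp / (4 * ρ),
    1 / (8 * ρ), 1 / (8 * ρ)]

/-- The matrix `𝒴`: diagonal entries `Ydiag`, symmetric entries `𝒴₅₆ = 𝒴₆₅ = p∥/4`,
zero elsewhere. -/
def Ymat (ρ pl pp : ℝ) : Matrix (Fin 10) (Fin 10) ℝ :=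
  Matrix.of fun i j =>
    if i = j then Ydiag ρ pl pp i
    else if (i = 4 ∧ j = 5) ∨ (i = 5 ∧ j = 4) then pl / 4
    else 0

/-- Matrix with diagonal `d`, entries `b` at (4,5), (5,4), zero elsewhere. -/
def Mgen (d : Fin 10 → ℝ) (b : ℝ) : Matrix (Fin 10) (Fin 10) ℝ :=
  Matrix.of fun i j =>
    if i = j then d i
    else if (i = 4 ∧ j = 5) ∨ (i = 5 ∧ j = 4) then b
    else 0

theorem sum10 (f : Fin 10 → ℝ) : ∑ i, f i =
    f 0 + f 1 + f 2 + f 3 + f 4 + f 5 + f 6 + f 7 + f 8 + f 9 := by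
  simp only [Fin.sum_univ_castSucc, Finset.univ_eq_empty, Finset.sum_empty, zero_add]
  rfl

theorem Mgen_symm (d : Fin 10 → ℝ) (b : ℝ) : (Mgen d b).IsSymm := by
  ext i j
  simp only [Mgen, Matrix.transpose_apply, Matrix.of_apply]
  by_cases h : i = j
  · subst h; rfl
  · rw [if_neg h, if_neg (Ne.symm h)]
    congr 1
    apply propext
    tauto

theorem Mgen_quad (d : Fin 10 → ℝ) (b : ℝ) (x : Fin 10 → ℝ) :
    x ⬝ᵥ (Mgen d b).mulVec x = (∑ i, d i * x i ^ 2) + 2 * b * x 4 * x 5 := by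
  simp [dotProduct, Matrix.mulVec, Mgen, sum10]
  ring

theorem Mgen_posDef (d : Fin 10 → ℝ) (b : ℝ) (hd : ∀ i, 0 < d i) (hb : b ^ 2 < d 4 * d 5) :
    (Mgen d b).PosDef := by
  refine Matrix.PosDef.of_dotProduct_mulVec_pos ?_ ?_
  · rw [Matrix.IsHermitian, Matrix.conjTranspose_eq_transpose_of_trivial]
    exact Mgen_symm d b
  · intro x hx
    rw [star_trivial, Mgen_quad]
    -- lower bound by a positive diagonal form
    have h4 := hd 4
    have key : ∀ u v : ℝ, u ≠ 0 ∨ v ≠ 0 → 0 < d 4 * u ^ 2 + d 5 * v ^ 2 + 2 * b * u * v := by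
      intro u v huv
      have h : d 4 * (d 4 * u ^ 2 + d 5 * v ^ 2 + 2 * b * u * v)
          = (d 4 * u + b * v) ^ 2 + (d 4 * d 5 - b ^ 2) * v ^ 2 := by ring
      have hc : 0 < d 4 * d 5 - b ^ 2 := by linarith
      refine pos_of_mul_pos_right (a := d 4) ?_ h4.le
      rw [h]
      by_cases hv : v = 0
      · subst hv
        have hu : u ≠ 0 := by simpa using huv
        have : d 4 * u ≠ 0 := mul_ne_zero h4.ne' hu
        simp only [mul_zero, add_zero]
        positivity
      · positivity
    have key0 : 0 ≤ d 4 * x 4 ^ 2 + d 5 * x 5 ^ 2 + 2 * b * x 4 * x 5 := by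
      by_cases h : x 4 ≠ 0 ∨ x 5 ≠ 0
      · exact (key _ _ h).le
      · push Not at h
        simp [h.1, h.2]
    have hsplit : (∑ i, d i * x i ^ 2) + 2 * b * x 4 * x 5
        = (∑ i, if i = 4 ∨ i = 5 then 0 else d i * x i ^ 2)
          + (d 4 * x 4 ^ 2 + d 5 * x 5 ^ 2 + 2 * b * x 4 * x 5) := by
      simp [sum10]
      ring
    rw [hsplit]
    have hnn : ∀ i ∈ Finset.univ, 0 ≤ (if i = 4 ∨ i = 5 then 0 else d i * x i ^ 2) := by
      intro i _
      have := hd i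
      split_ifs <;> positivity
    by_cases h : x 4 ≠ 0 ∨ x 5 ≠ 0
    · exact add_pos_of_nonneg_of_pos (Finset.sum_nonneg hnn) (key _ _ h)
    · push Not at h
      obtain ⟨i, hi⟩ := Function.ne_iff.mp hx
      refine add_pos_of_pos_of_nonneg (Finset.sum_pos' hnn ⟨i, Finset.mem_univ _, ?_⟩) key0
      have hi' : x i ≠ 0 := hi
      have := hd i
      rw [if_neg]
      · positivity
      · rintro (rfl | rfl)
        · exact hi' h.1
        · exact hi' h.2

theorem Mgen_sq (d e : Fin 10 → ℝ) (b c : ℝ)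
    (h : ∀ i, d i ^ 2 + (if i = 4 ∨ i = 5 then b ^ 2 else 0) = e i)
    (hc : b * (d 4 + d 5) = c) : Mgen d b * Mgen d b = Mgen e c := by
  ext i j
  have hi := h i
  rw [← hc]
  simp only [Mgen, Matrix.mul_apply, Matrix.of_apply, ← hi]
  clear hi h hc
  fin_cases i <;> fin_cases j <;> simp [sum10] <;> ring

/-- for all `ρ, p∥, p⊥ > 0`, the Barth scaling matrix `T` is symmetric
positive definite and satisfies `T² = 𝒴`; i.e. `T` is the positive square root of `𝒴`. -/
theorem barth_scaling_matrix_is_positive_sqrt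
    (ρ pl pp : ℝ) (hρ : 0 < ρ) (hpl : 0 < pl) (hpp : 0 < pp) :
    (Tmat ρ pl pp).IsSymm ∧ (Tmat ρ pl pp).PosDef ∧
      Tmat ρ pl pp * Tmat ρ pl pp = Ymat ρ pl pp := by
  have hD : 0 < 5 * pl ^ 2 + 4 * pl * ρ + ρ ^ 2 := by positivity
  have hT : Tmat ρ pl pp = Mgen (Tdiag ρ pl pp)
      (pl * Real.sqrt ρ / (2 * Real.sqrt (5 * pl ^ 2 + 4 * pl * ρ + ρ ^ 2))) := rfl
  have hY : Ymat ρ pl pp = Mgen (Ydiag ρ pl pp) (pl / 4) := rfl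
  rw [hT, hY]
  have e1 : Tdiag ρ pl pp 4 = Real.sqrt ρ * (2 * pl + ρ) /
      (2 * Real.sqrt (5 * pl ^ 2 + 4 * pl * ρ + ρ ^ 2)) := rfl
  have e2 : Tdiag ρ pl pp 5 = pl * (5 * pl + 2 * ρ) /
      (2 * (Real.sqrt ρ * Real.sqrt (5 * pl ^ 2 + 4 * pl * ρ + ρ ^ 2))) := by
    rw [← Real.sqrt_mul hρ.le]; rfl
  have sD := Real.sq_sqrt hD.le
  have sρ := Real.sq_sqrt hρ.le
  have sp := Real.sq_sqrt hpp.le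
  have pD := Real.sqrt_pos.mpr hD
  have pρ := Real.sqrt_pos.mpr hρ
  have a1 : (1 / (2 * Real.sqrt (2 * ρ))) ^ 2 = 1 / (8 * ρ) := by
    rw [div_pow, mul_pow, Real.sq_sqrt (by positivity)]; ring
  have a2 : (Real.sqrt pp / (2 * Real.sqrt ρ)) ^ 2 = pp / (4 * ρ) := by
    rw [div_pow, mul_pow, sp, sρ]; ring
  have a3 : (Real.sqrt pp / (2 * ρ)) ^ 2 = pp / (4 * ρ ^ 2) := by
    rw [div_pow, mul_pow, sp]; ring
  refine ⟨Mgen_symm _ _, Mgen_posDef _ _ ?_ ?_, Mgen_sq _ _ _ _ ?_ ?_⟩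
  · intro i
    fin_cases i <;> simp [Tdiag] <;> positivity
  · rw [e1, e2]
    generalize Real.sqrt (5 * pl ^ 2 + 4 * pl * ρ + ρ ^ 2) = s at *
    generalize Real.sqrt ρ = r at *
    have : r * (2 * pl + ρ) / (2 * s) * (pl * (5 * pl + 2 * ρ) / (2 * (r * s)))
        - (pl * r / (2 * s)) ^ 2 = (pl * (10 * pl ^ 2 + 8 * pl * ρ + 2 * ρ ^ 2)) / (4 * s ^ 2) := by
      field_simp
      rw [sρ]
      ring
    have h2 : 0 < (pl * (10 * pl ^ 2 + 8 * pl * ρ + 2 * ρ ^ 2)) / (4 * s ^ 2) := by positivity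
    linarith
  · have b4 : Tdiag ρ pl pp 4 ^ 2 +
        (pl * Real.sqrt ρ / (2 * Real.sqrt (5 * pl ^ 2 + 4 * pl * ρ + ρ ^ 2))) ^ 2 = ρ / 4 := by
      rw [e1]
      simp only [div_pow, mul_pow, sD, sρ]
      field_simp
      ring
    have b5 : Tdiag ρ pl pp 5 ^ 2 +
        (pl * Real.sqrt ρ / (2 * Real.sqrt (5 * pl ^ 2 + 4 * pl * ρ + ρ ^ 2))) ^ 2
        = 5 * pl ^ 2 / (4 * ρ) := by
      rw [e2]
      simp only [div_pow, mul_pow, sD, sρ]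
      field_simp
      ring
    have z : ∀ a b : ℝ, a = b → a + 0 = b := fun a b h => by rw [add_zero, h]
    intro i
    fin_cases i
    · exact z _ _ a1
    · exact z _ _ a1
    · exact z _ _ a2
    · exact z _ _ a3
    · exact b4
    · exact b5
    · exact z _ _ a3
    · exact z _ _ a2
    · exact z _ _ a1
    · exact z _ _ a1
  · rw [e1, e2]
    generalize Real.sqrt (5 * pl ^ 2 + 4 * pl * ρ + ρ ^ 2) = s at *
    generalize Real.sqrt ρ = r at *
    field_simp
    rw [sD, sρ]
    ring

end
end
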